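/- If G ∈ 𝒜_> is a μ-atom, then the closure of G⁺ in M_F equals G⁰, and G⁰ is not an open subset of M_F. -/

import Mathlib

open MeasureTheory Topology Set Pointwise

/-- The set of all real-valued measurable functions on `X`, as a subtype. -/
abbrev Mble (X : Type*) [MeasurableSpace X] : Type _ := {f : X → ℝ // Measurable f}

/-- The basic set `B(f, A, ε)`: all `g` such that for some measurable null set `N`,
`sup_{x ∈ A \ N} |f x - g x| < ε`. -/
def FBall {X : Type*} [MeasurableSpace X] (μ : Measure X) (f : Mble X) (A : Set X)
    (ε : ℝ) : Set (Mble X) :=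
  {g | ∃ N : Set X, MeasurableSet N ∧ μ N = 0 ∧
        ∃ b : ℝ, b < ε ∧ ∀ x ∈ A \ N, |f.1 x - g.1 x| ≤ b}

/-- The `F_μ`-topology on `Mble X`, generated by the sets `B(f, A, ε)` with
`A` measurable of finite measure and `ε > 0`. -/
def FTop {X : Type*} [MeasurableSpace X] (μ : Measure X) : TopologicalSpace (Mble X) :=
  TopologicalSpace.generateFrom
    {S | ∃ (f : Mble X) (A : Set X) (ε : ℝ),
        MeasurableSet A ∧ μ A < ⊤ ∧ 0 < ε ∧ S = FBall μ f A ε}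

/-- A `μ`-atom: a measurable set of positive measure admitting no decomposition into two
disjoint measurable pieces of positive measure. -/
def MuAtom {X : Type*} [MeasurableSpace X] (μ : Measure X) (A : Set X) : Prop :=
  MeasurableSet A ∧ 0 < μ A ∧
    ¬ ∃ B C : Set X, MeasurableSet B ∧ MeasurableSet C ∧ Disjoint B C ∧
        B ∪ C = A ∧ 0 < μ B ∧ 0 < μ C

/-- `G` is a union of finitely many `μ`-atoms. -/
def FinAtomUnion {X : Type*} [MeasurableSpace X] (μ : Measure X) (G : Set X) : Prop :=
  ∃ (n : ℕ) (F : Fin n → Set X), (∀ i, MuAtom μ (F i)) ∧ G = ⋃ i, F i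

/-- `L^∞_G`: the measurable functions that are essentially bounded on `G`. -/
def Linf {X : Type*} [MeasurableSpace X] (μ : Measure X) (G : Set X) : Set (Mble X) :=
  {f | ∃ M₀ : ℝ, 0 < M₀ ∧ ∃ N : Set X, MeasurableSet N ∧ μ N = 0 ∧
        ∀ x ∈ G \ N, |f.1 x| ≤ M₀}

/-- The intersection `⋂_{G ∈ 𝒜_>} L^∞_G`. -/
def InterLinf {X : Type*} [MeasurableSpace X] (μ : Measure X) : Set (Mble X) :=
  ⋂ G ∈ {A : Set X | MeasurableSet A ∧ 0 < μ A ∧ μ A < ⊤}, Linf μ G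

/-- The zero function as an element of `Mble X`. -/
def zeroM {X : Type*} [MeasurableSpace X] : Mble X := ⟨fun _ => 0, measurable_const⟩

/-- `μ` is hemifinite: some sequence in `𝒜_>` almost contains every member of `𝒜_>`. -/
def Hemifinite {X : Type*} [MeasurableSpace X] (μ : Measure X) : Prop :=
  ∃ A : ℕ → Set X, (∀ n, MeasurableSet (A n) ∧ 0 < μ (A n) ∧ μ (A n) < ⊤) ∧
    ∀ F : Set X, MeasurableSet F → 0 < μ F → μ F < ⊤ → ∃ n, μ (F \ A n) = 0

/-- `G⁺`: functions strictly positive μ-almost everywhere on `G`. -/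
def Gplus {X : Type*} [MeasurableSpace X] (μ : Measure X) (G : Set X) : Set (Mble X) :=
  {f | ∃ N : Set X, MeasurableSet N ∧ μ N = 0 ∧ ∀ x ∈ G \ N, 0 < f.1 x}

/-- `G⁰`: functions nonnegative μ-almost everywhere on `G`. -/
def Gzero {X : Type*} [MeasurableSpace X] (μ : Measure X) (G : Set X) : Set (Mble X) :=
  {f | ∃ N : Set X, MeasurableSet N ∧ μ N = 0 ∧ ∀ x ∈ G \ N, 0 ≤ f.1 x}

instance {X : Type*} [MeasurableSpace X] : Add (Mble X) :=
  ⟨fun f g => ⟨f.1 + g.1, f.2.add g.2⟩⟩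

/-!
Adding constants gives continuous paths `c ↦ f + c` from `ℝ` into `M_F`. If `f ∈ G⁰`, the path
lies in `G⁺` for `c > 0` and tends to `f` as `c → 0`, so `G⁺` is dense in `G⁰`; and the path of
constant functions meets `G⁰` exactly for `c ≥ 0`, so `G⁰` is not open. Finally, a function
outside `G⁰` is at most some `-ε < 0` on a subset `B ⊆ G` of positive finite measure, and
`B(f, B, ε)` is then a neighbourhood of `f` missing `G⁰`, so `G⁰` is closed.
-/

section

variable {X : Type*} [MeasurableSpace X] {μ : Measure X} {f g : Mble X} {A G : Set X} {ε : ℝ}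

theorem exists_null_forall_mem_diff_iff_ae {p : X → Prop} :
    (∃ N, MeasurableSet N ∧ μ N = 0 ∧ ∀ x ∈ A \ N, p x) ↔ ∀ᵐ x ∂μ, x ∈ A → p x := by
  constructor
  · rintro ⟨N, -, hN, hp⟩
    filter_upwards [measure_eq_zero_iff_ae_notMem.1 hN] with x hxN hxA using hp x ⟨hxA, hxN⟩
  · intro hp
    obtain ⟨N, hpN, hN, hN0⟩ := exists_measurable_superset_of_null (ae_iff.1 hp)
    exact ⟨N, hN, hN0, fun x hx => by_contra fun hpx => hx.2 (hpN fun h => hpx (h hx.1))⟩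

theorem mem_gplus_iff_ae : f ∈ Gplus μ G ↔ ∀ᵐ x ∂μ, x ∈ G → 0 < f.1 x :=
  exists_null_forall_mem_diff_iff_ae

theorem mem_gzero_iff_ae : f ∈ Gzero μ G ↔ ∀ᵐ x ∂μ, x ∈ G → 0 ≤ f.1 x :=
  exists_null_forall_mem_diff_iff_ae

theorem mem_fBall_iff_ae :
    g ∈ FBall μ f A ε ↔ ∃ b < ε, ∀ᵐ x ∂μ, x ∈ A → |f.1 x - g.1 x| ≤ b := by
  simp only [← exists_null_forall_mem_diff_iff_ae]
  exact ⟨fun ⟨N, hN, hN0, b, hb, h⟩ => ⟨b, hb, N, hN, hN0, h⟩,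
    fun ⟨b, hb, N, hN, hN0, h⟩ => ⟨N, hN, hN0, b, hb, h⟩⟩

theorem mem_fBall_self (hε : 0 < ε) : f ∈ FBall μ f A ε :=
  mem_fBall_iff_ae.2 ⟨0, hε, .of_forall fun x _ => by rw [sub_self, abs_zero]⟩

theorem exists_fBall_subset_fBall (hg : g ∈ FBall μ f A ε) :
    ∃ δ > 0, FBall μ g A δ ⊆ FBall μ f A ε := by
  obtain ⟨b, hbε, hfg⟩ := mem_fBall_iff_ae.1 hg
  refine ⟨ε - b, sub_pos.2 hbε, fun h hh => ?_⟩
  obtain ⟨c, hc, hgh⟩ := mem_fBall_iff_ae.1 hh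
  refine mem_fBall_iff_ae.2 ⟨b + c, lt_sub_iff_add_lt'.1 hc, ?_⟩
  filter_upwards [hfg, hgh] with x hfgx hghx hxA
  exact (abs_sub_le _ (g.1 x) _).trans (add_le_add (hfgx hxA) (hghx hxA))

theorem isOpen_fBall (hA : MeasurableSet A) (hAfin : μ A < ⊤) (hε : 0 < ε) :
    IsOpen[FTop μ] (FBall μ f A ε) :=
  .basic _ ⟨f, A, ε, hA, hAfin, hε, rfl⟩

/-- The constant function with value `c`, as an element of `Mble X`. It is used to
translate an element of `Mble X` by a constant. -/
def constM (c : ℝ) : Mble X := ⟨fun _ => c, measurable_const⟩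

theorem add_constM_mem_fBall {c d : ℝ} (h : |c - d| < ε) :
    f + constM d ∈ FBall μ (f + constM c) A ε := by
  refine mem_fBall_iff_ae.2 ⟨|c - d|, h, .of_forall fun x _ => ?_⟩
  change |f.1 x + c - (f.1 x + d)| ≤ |c - d|
  rw [add_sub_add_left_eq_sub]

theorem continuous_add_constM (μ : Measure X) (f : Mble X) :
    Continuous[_, FTop μ] fun c : ℝ => f + constM c := by
  refine continuous_generateFrom_iff.2 ?_
  rintro _ ⟨g, A, ε, -, -, -, rfl⟩
  refine Metric.isOpen_iff.2 fun c hc => ?_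
  obtain ⟨δ, hδ, hsub⟩ := exists_fBall_subset_fBall hc
  exact ⟨δ, hδ, fun d hd => hsub (add_constM_mem_fBall (Metric.mem_ball'.1 hd))⟩

theorem gzero_subset_closure_gplus : Gzero μ G ⊆ @closure _ (FTop μ) (Gplus μ G) := by
  intro f hf
  have hpos : MapsTo (fun c => f + constM c) (Ioi 0) (Gplus μ G) := by
    intro c (hc : 0 < c)
    refine mem_gplus_iff_ae.2 ?_
    filter_upwards [mem_gzero_iff_ae.1 hf] with x hx hxG
    exact add_pos_of_nonneg_of_pos (hx hxG) hc
  have hzero : f + constM 0 = f := Subtype.ext (add_zero f.1)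
  have h0 : (0 : ℝ) ∈ closure (Ioi 0) := by rw [closure_Ioi]; exact self_mem_Ici
  let _ := FTop μ
  have hclosure := map_mem_closure (continuous_add_constM μ f) h0 hpos
  rwa [hzero] at hclosure

theorem zeroM_add_constM_mem_gzero_iff (hG : 0 < μ G) {c : ℝ} :
    zeroM + constM c ∈ Gzero μ G ↔ 0 ≤ c := by
  have hval (x : X) : (zeroM + constM c : Mble X).1 x = c := zero_add c
  simp only [mem_gzero_iff_ae, hval]
  refine ⟨fun h => ?_, fun hc => .of_forall fun _ _ => hc⟩
  obtain ⟨x, hxG, hx⟩ := (frequently_ae_mem_iff.2 hG.ne').and_eventually h |>.exists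
  exact hx hxG

theorem not_isOpen_gzero (hG : 0 < μ G) : ¬ IsOpen[FTop μ] (Gzero μ G) := by
  intro hopen
  have hpre : (fun c : ℝ => zeroM + constM c) ⁻¹' Gzero μ G = Ici 0 :=
    Set.ext fun c => zeroM_add_constM_mem_gzero_iff hG
  have hIci : IsOpen (Ici (0 : ℝ)) :=
    hpre ▸ continuous_def.1 (continuous_add_constM μ zeroM) _ hopen
  have h0 : (0 : ℝ) ∈ interior (Ici 0) := hIci.interior_eq.symm ▸ self_mem_Ici
  rw [interior_Ici, mem_Ioi] at h0
  exact h0.false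

/-- `μ` is semifinite on `G`: every measurable subset of `G` of positive measure contains a
measurable subset of positive finite measure. It allows the failure of `f ≥ 0` a.e. on `G` to be
detected by a ball `B(f, A, ε)`, for which `A` has finite measure. -/
def SemifiniteOn (μ : Measure X) (G : Set X) : Prop :=
  ∀ A ⊆ G, MeasurableSet A → 0 < μ A → ∃ B ⊆ A, MeasurableSet B ∧ 0 < μ B ∧ μ B < ⊤

theorem semifiniteOn_of_measure_lt_top (hG : μ G < ⊤) : SemifiniteOn μ G :=
  fun A hAG hA hA0 => ⟨A, Subset.rfl, hA, hA0, (measure_mono hAG).trans_lt hG⟩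

theorem exists_le_neg_on_of_notMem_gzero (hG : MeasurableSet G) (hsf : SemifiniteOn μ G)
    (hf : f ∉ Gzero μ G) :
    ∃ ε > 0, ∃ B ⊆ G, MeasurableSet B ∧ 0 < μ B ∧ μ B < ⊤ ∧ ∀ x ∈ B, f.1 x ≤ -ε := by
  rw [mem_gzero_iff_ae, ← ae_restrict_iff' hG, ae_const_le_iff_forall_lt_measure_zero] at hf
  push Not at hf
  obtain ⟨b, hb, hμb⟩ := hf
  have hmeas : MeasurableSet {x | f.1 x ≤ b} := measurableSet_le f.2 measurable_const
  rw [Measure.restrict_apply hmeas] at hμb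
  obtain ⟨B, hB, hBm, hB0, hBfin⟩ :=
    hsf _ inter_subset_right (hmeas.inter hG) (pos_iff_ne_zero.2 hμb)
  exact ⟨-b, neg_pos.2 hb, B, hB.trans inter_subset_right, hBm, hB0, hBfin,
    fun x hx => (neg_neg b).symm ▸ (hB hx).1⟩

theorem disjoint_fBall_gzero (hAG : A ⊆ G) (hA : 0 < μ A) (hf : ∀ x ∈ A, f.1 x ≤ -ε) :
    Disjoint (FBall μ f A ε) (Gzero μ G) := by
  refine disjoint_left.2 fun g hgf hg => ?_
  obtain ⟨b, hb, hfg⟩ := mem_fBall_iff_ae.1 hgf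
  obtain ⟨x, hxA, hfgx, hgx⟩ := ((frequently_ae_mem_iff.2 hA.ne').and_eventually
    (hfg.and (mem_gzero_iff_ae.1 hg))).exists
  linarith [hf x hxA, hgx (hAG hxA), neg_le_of_abs_le (hfgx hxA)]

theorem isClosed_gzero (hG : MeasurableSet G) (hsf : SemifiniteOn μ G) :
    IsClosed[FTop μ] (Gzero μ G) := by
  let _ := FTop μ
  refine isOpen_compl_iff.1 (isOpen_iff_forall_mem_open.2 fun f hf => ?_)
  obtain ⟨ε, hε, B, hBG, hB, hB0, hBfin, hfB⟩ := exists_le_neg_on_of_notMem_gzero hG hsf hf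
  exact ⟨FBall μ f B ε, (disjoint_fBall_gzero hBG hB0 hfB).subset_compl_right,
    isOpen_fBall hB hBfin hε, mem_fBall_self hε⟩

theorem gplus_subset_gzero : Gplus μ G ⊆ Gzero μ G := by
  intro f hf
  refine mem_gzero_iff_ae.2 ?_
  filter_upwards [mem_gplus_iff_ae.1 hf] with x hx hxG using (hx hxG).le

theorem closure_gplus (hG : MeasurableSet G) (hsf : SemifiniteOn μ G) :
    @closure _ (FTop μ) (Gplus μ G) = Gzero μ G := by
  let _ := FTop μ
  exact (closure_minimal gplus_subset_gzero (isClosed_gzero hG hsf)).antisymm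
    gzero_subset_closure_gplus

theorem stmt12_general (hG : MeasurableSet G) (hG0 : 0 < μ G) (hsf : SemifiniteOn μ G) :
    @closure _ (FTop μ) (Gplus μ G) = Gzero μ G ∧ ¬ IsOpen[FTop μ] (Gzero μ G) :=
  ⟨closure_gplus hG hsf, not_isOpen_gzero hG0⟩

end

/-- if `G ∈ 𝒜_>` is a `μ`-atom, then the closure of `G⁺` in `M_F` is `G⁰`,
and `G⁰` is not open in `M_F`. -/
theorem stmt12 {X : Type*} [MeasurableSpace X] (μ : Measure X)
    (hpos : 0 < μ Set.univ)
    (hsub : ∀ A : Set X, MeasurableSet A → μ A = ⊤ →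
      ∃ B, B ⊆ A ∧ MeasurableSet B ∧ 0 < μ B ∧ μ B < ⊤)
    (G : Set X) (hG : MeasurableSet G) (hG0 : 0 < μ G) (hGfin : μ G < ⊤)
    (hatom : MuAtom μ G) :
    @closure (Mble X) (FTop μ) (Gplus μ G) = Gzero μ G ∧
      ¬ IsOpen[FTop μ] (Gzero μ G) :=
  stmt12_general hG hG0 (semifiniteOn_of_measure_lt_top hGfin)
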